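/- Let (A₁,V₁,D₁,γ₁) and (A₂,V₂,D₂,γ₂) be even algebraic spectral triples over a field K with char K ≠ 2, and assume γ₁ = π₁(η₁) and γ₂ = π₂(η₂) for some η₁ ∈ A₁, η₂ ∈ A₂. Fix n ≥ 1 and a finite family indexed by t, where for each t there are i_t, j_t ≥ 0 with i_t + j_t = n − 1, elements a_{t,0},…,a_{t,i_t} ∈ A₁ and b_{t,0},…,b_{t,j_t} ∈ A₂. Set P_t := π₁(a_{t,0}) ∘ [D₁,π₁(a_{t,1})] ∘ ⋯ ∘ [D₁,π₁(a_{t,i_t})], P′_t := [D₁,π₁(a_{t,0})] ∘ ⋯ ∘ [D₁,π₁(a_{t,i_t})] in End_K(V₁), and Q_t := π₂(b_{t,0}) ∘ [D₂,π₂(b_{t,1})] ∘ ⋯ ∘ [D₂,π₂(b_{t,j_t})], Q′_t := [D₂,π₂(b_{t,0})] ∘ ⋯ ∘ [D₂,π₂(b_{t,j_t})] in End_K(V₂). If Σ_t (P_t ∘ γ₁^{j_t}) ⊗ Q_t = 0 in End_K(V₁ ⊗_K V₂), then Σ_t [ (P′_t ∘ γ₁^{j_t}) ⊗ Q_t + (−1)^{i_t}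 (P_t ∘ γ₁^{j_t+1}) ⊗ Q′_t ] lies in the K-subspace Σ_{i+j=n} [ span{ (P ∘ γ₁^j) ⊗ Q : P ∈ π₁(dJ₀^{i−1}), Q ∈ π₂(Ω^j) } + span{ (P ∘ γ₁^j) ⊗ Q : P ∈ π₁(Ω^i), Q ∈ π₂(dJ₀^{j−1}) } ] of End_K(V₁ ⊗_K V₂), where π(dJ₀^{−1}) := {0}. -/

import Mathlib

/-!
STATEMENT 7: the key computation (Lemma 2.11 of the paper): for product triples whose
gradings are represented, the image under `π̃ ∘ d̃` of an element of `J̃₀^{n-1}` lies in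
`Σ_{i+j=n} π₁(dJ₀^{i-1})γ₁^j ⊗ π₂(Ω^j) + π₁(Ω^i)γ₁^j ⊗ π₂(dJ₀^{j-1})`.
-/

open TensorProduct

variable (K : Type*) [Field K]

section Defs

variable {A V : Type*} [Ring A] [Algebra K A] [AddCommGroup V] [Module K V]

/-- The ordered product `[D,π(c₀)]∘⋯∘[D,π(c_{k-1})]`. -/
def prodComm (π : A →ₐ[K] Module.End K V) (D : Module.End K V) {k : ℕ} (c : Fin k → A) :
    Module.End K V :=
  (List.ofFn fun s : Fin k => D * π (c s) - π (c s) * D).prod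

/-- The subspace `π(Ω^k)` of `End_K(V)`: the span of all
`π(a₀)∘[D,π(a₁)]∘⋯∘[D,π(a_k)]` (for `k = 0` this is `π(A)`). -/
def piOmega (π : A →ₐ[K] Module.End K V) (D : Module.End K V) (k : ℕ) :
    Submodule K (Module.End K V) :=
  Submodule.span K {T | ∃ (a : A) (c : Fin k → A), T = π a * prodComm K π D c}

/-- The set `π(dJ₀^{i-1}) ⊆ End_K(V)` (with `i` factors), and `π(dJ₀^{-1}) := {0}`:
all finite sums `Σ_t [D,π(a_{t,0})]∘⋯∘[D,π(a_{t,i-1})]` such that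
`Σ_t π(a_{t,0})∘[D,π(a_{t,1})]∘⋯∘[D,π(a_{t,i-1})] = 0`. -/
def dJSet (π : A →ₐ[K] Module.End K V) (D : Module.End K V) : ℕ → Set (Module.End K V)
  | 0 => {0}
  | (k + 1) =>
    {T | ∃ (m : ℕ) (x : Fin m → A) (c : Fin m → Fin k → A),
      (∑ t : Fin m, π (x t) * prodComm K π D (c t)) = 0 ∧
      T = ∑ t : Fin m, (D * π (x t) - π (x t) * D) * prodComm K π D (c t)}

end Defs

/-!
Once the grading is represented, `D` itself is a one-form, and modulo junk the differential of a
form is its graded commutator with `D`.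

The pairs `(π ω, π (dω))` form a graded algebra under `(P, T) (P', T') = (P P', T P' ± P T')`, and
`dJ₀ᵏ` consists of the `T` with `(0, T)` such a pair. The graded commutator is itself a graded
derivation, so the operators `P` for which `(P, [D, P])` is such a pair are closed under products.
They contain every `π a`; if they also contain `D`, they contain every
`P = π(a₀)[D, π(a₁)]⋯[D, π(a_k)]`, and then `[D, π(a₀)]⋯[D, π(a_k)] - [D, P]` is junk. That `D` is
among them comes from the grading: if `γ = π η`, then `D` and `[D, D] = 2 D²` represent
`ω = -½ η dη` and `dω`.

Replacing `P'_t` and `Q'_t` by graded commutators therefore changes the sum only by product junk.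
After the replacement, since `i_t + j_t = n - 1` is constant, the sum is the graded commutator of
`D₁ ⊗ 1 + γ₁ ⊗ D₂` with `Σ_t P_t γ₁^{j_t} ⊗ Q_t`, which is zero.
-/

section GradedCommutator

variable (R : Type*) {B : Type*} [CommRing R] [Ring B] [Algebra R B]

/-- The graded commutator `[D, P] = D P - (-1)ᵏ P D` of an odd element `D` with an element `P` of
degree `k`. The degree is an argument because `B` carries no grading. -/
def gradedCommutator (D : B) (k : ℕ) : B →ₗ[R] B :=
  LinearMap.mulLeft R D - (-1 : R) ^ k • LinearMap.mulRight R D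

/-- The product `(P, T) (Q, U) = (P Q, T Q + (-1)ᵏ P U)` of pairs consisting of a form and its
differential, the left form having degree `k`. -/
def leibnizMul (k : ℕ) : B × B →ₗ[R] B × B →ₗ[R] B × B :=
  LinearMap.mk₂ R (fun p q => (p.1 * q.1, p.2 * q.1 + (-1 : R) ^ k • (p.1 * q.2)))
    (fun p p' q => by ext <;> simp only [Prod.fst_add, Prod.snd_add, add_mul, smul_add]; abel)
    (fun r p q => by ext <;> simp [smul_comm r])
    (fun p q q' => by ext <;> simp only [Prod.fst_add, Prod.snd_add, mul_add, smul_add]; abel)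
    (fun r p q => by ext <;> simp [smul_comm r])

variable {R}

theorem gradedCommutator_apply (D : B) (k : ℕ) (P : B) :
    gradedCommutator R D k P = D * P - (-1 : R) ^ k • (P * D) :=
  rfl

theorem leibnizMul_apply (k : ℕ) (p q : B × B) :
    leibnizMul R k p q = (p.1 * q.1, p.2 * q.1 + (-1 : R) ^ k • (p.1 * q.2)) :=
  rfl

theorem leibnizMul_assoc {k l n : ℕ} (hn : k + l = n) (p q r : B × B) :
    leibnizMul R n (leibnizMul R k p q) r = leibnizMul R k p (leibnizMul R l q r) := by
  subst hn
  simp only [leibnizMul_apply, add_mul, mul_add, smul_add, smul_mul_assoc, mul_smul_comm,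
    smul_smul, pow_add, mul_assoc, add_assoc]

theorem leibnizMul_gradedCommutator (D : B) (k l : ℕ) (P Q : B) :
    leibnizMul R k (P, gradedCommutator R D k P) (Q, gradedCommutator R D l Q) =
      (P * Q, gradedCommutator R D (k + l) (P * Q)) := by
  simp only [leibnizMul_apply, gradedCommutator_apply, sub_mul, mul_sub, smul_sub, smul_mul_assoc,
    mul_smul_comm, smul_smul, pow_add, mul_assoc, sub_add_sub_cancel]

theorem mul_pow_of_anticommute {D γ : B} (hγD : γ * D = -(D * γ)) (j : ℕ) :
    D * γ ^ j = (-1 : R) ^ j • (γ ^ j * D) := by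
  have h : SemiconjBy D γ ((-1 : R) • γ) := by
    simp [SemiconjBy, hγD]
  simpa only [smul_pow, smul_mul_assoc] using (h.pow_right j).eq

end GradedCommutator

section TensorMap

variable {R M M' N N' : Type*} [CommRing R] [AddCommGroup M] [Module R M] [AddCommGroup M']
  [Module R M'] [AddCommGroup N] [Module R N] [AddCommGroup N'] [Module R N']

theorem tensorMap_sub_left (f g : M →ₗ[R] M') (h : N →ₗ[R] N') :
    TensorProduct.map (f - g) h = TensorProduct.map f h - TensorProduct.map g h :=
  LinearMap.map_sub₂ (TensorProduct.mapBilinear (.id R) M N M' N') f g h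

theorem tensorMap_sub_right (f : M →ₗ[R] M') (g h : N →ₗ[R] N') :
    TensorProduct.map f (g - h) = TensorProduct.map f g - TensorProduct.map f h :=
  map_sub (TensorProduct.mapBilinear (.id R) M N M' N' f) g h

end TensorMap

section ProductDirac

variable {R M N : Type*} [CommRing R] [AddCommGroup M] [Module R M] [AddCommGroup N] [Module R N]

/-- The Dirac operator `D₁ ⊗ 1 + γ ⊗ D₂` of the product of two spectral triples, the first of them
graded by `γ`. -/
def productDirac (D₁ γ : Module.End R M) (D₂ : Module.End R N) : Module.End R (M ⊗[R] N) :=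
  TensorProduct.map D₁ 1 + TensorProduct.map γ D₂

theorem gradedCommutator_productDirac_map {D₁ γ P : Module.End R M} {i : ℕ}
    (hγD : γ * D₁ = -(D₁ * γ)) (hγP : γ * P = (-1 : R) ^ i • (P * γ)) (D₂ Q : Module.End R N)
    (j : ℕ) :
    gradedCommutator R (productDirac D₁ γ D₂) (i + j) (TensorProduct.map (P * γ ^ j) Q) =
      TensorProduct.map (gradedCommutator R D₁ i P * γ ^ j) Q +
        (-1 : R) ^ i • TensorProduct.map (P * γ ^ (j + 1)) (gradedCommutator R D₂ j Q) := by
  have hsq : (-1 : R) ^ j * (-1) ^ j = 1 := by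
    rw [← mul_pow, neg_one_mul, neg_neg, one_pow]
  have hleft : productDirac D₁ γ D₂ * TensorProduct.map (P * γ ^ j) Q =
      TensorProduct.map (D₁ * P * γ ^ j) Q +
        (-1 : R) ^ i • TensorProduct.map (P * γ ^ (j + 1)) (D₂ * Q) := by
    rw [productDirac, add_mul, ← TensorProduct.map_mul, ← TensorProduct.map_mul, one_mul,
      ← mul_assoc, ← mul_assoc, hγP, smul_mul_assoc, mul_assoc P γ, ← pow_succ',
      TensorProduct.map_smul_left]
  have hright : TensorProduct.map (P * γ ^ j) Q * productDirac D₁ γ D₂ =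
      (-1 : R) ^ j • TensorProduct.map (P * D₁ * γ ^ j) Q +
        TensorProduct.map (P * γ ^ (j + 1)) (Q * D₂) := by
    rw [productDirac, mul_add, ← TensorProduct.map_mul, ← TensorProduct.map_mul, mul_one,
      mul_assoc P D₁, mul_pow_of_anticommute (R := R) hγD, mul_smul_comm,
      TensorProduct.map_smul_left, smul_smul, hsq, one_smul, mul_assoc P _ γ, ← pow_succ, mul_assoc]
  simp only [gradedCommutator_apply, hleft, hright, sub_mul, smul_mul_assoc, tensorMap_sub_left,
    tensorMap_sub_right, TensorProduct.map_smul_left, TensorProduct.map_smul_right, smul_sub,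
    smul_add, smul_smul, pow_add, mul_assoc, hsq, mul_one]
  abel

end ProductDirac

section Forms

variable {A V : Type*} [Ring A] [Algebra K A] [AddCommGroup V] [Module K V]

/-- The operator `π(a₀)[D,π(a₁)]⋯[D,π(a_k)]` representing the universal form `a₀ da₁ ⋯ da_k`. -/
def reprForm (π : A →ₐ[K] Module.End K V) (D : Module.End K V) {k : ℕ} (a : Fin (k + 1) → A) :
    Module.End K V :=
  π (a 0) * prodComm K π D fun s : Fin k => a s.succ

/-- The pairs `(π ω, π (dω))` for `ω` a universal `k`-form. As a subspace of pairs it records the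
failure of `π ω ↦ π (dω)` to be well defined, which is the junk. -/
def formPairs (π : A →ₐ[K] Module.End K V) (D : Module.End K V) (k : ℕ) :
    Submodule K (Module.End K V × Module.End K V) :=
  Submodule.span K (Set.range fun a : Fin (k + 1) → A => (reprForm K π D a, prodComm K π D a))

variable {K} {π : A →ₐ[K] Module.End K V} {D γ : Module.End K V}

theorem prodComm_zero (c : Fin 0 → A) : prodComm K π D c = 1 := by
  simp [prodComm]

theorem prodComm_succ {k : ℕ} (c : Fin (k + 1) → A) :
    prodComm K π D c =
      (D * π (c 0) - π (c 0) * D) * prodComm K π D fun s : Fin k => c s.succ := by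
  simp [prodComm, List.ofFn_succ]

theorem reprForm_mem_piOmega {k : ℕ} (a : Fin (k + 1) → A) :
    reprForm K π D a ∈ piOmega K π D k :=
  Submodule.subset_span ⟨_, _, rfl⟩

theorem reprForm_prodComm_mem_formPairs {k : ℕ} (a : Fin (k + 1) → A) :
    (reprForm K π D a, prodComm K π D a) ∈ formPairs K π D k :=
  Submodule.subset_span ⟨a, rfl⟩

theorem mem_dJSet_succ_of_mem_formPairs {k : ℕ} {T : Module.End K V}
    (hT : ((0 : Module.End K V), T) ∈ formPairs K π D k) : T ∈ dJSet K π D (k + 1) := by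
  obtain ⟨m, r, g, hg⟩ := Submodule.mem_span_set'.1 hT
  choose a ha using fun t => (g t).2
  simp only [← ha, reprForm, Prod.ext_iff, Prod.fst_sum, Prod.snd_sum, Prod.smul_fst,
    Prod.smul_snd] at hg
  refine ⟨m, fun t => r t • a t 0, fun t s => a t s.succ, ?_, ?_⟩
  · simpa only [map_smul, smul_mul_assoc] using hg.1
  · simpa only [prodComm_succ, map_smul, smul_mul_assoc, mul_smul_comm, ← smul_sub] using hg.2.symm

theorem leibnizMul_pi_mem_formPairs (a : A) {k : ℕ} {q : Module.End K V × Module.End K V}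
    (hq : q ∈ formPairs K π D k) :
    leibnizMul K 0 (π a, D * π a - π a * D) q ∈ formPairs K π D k := by
  suffices formPairs K π D k ≤
      (formPairs K π D k).comap (leibnizMul K 0 (π a, D * π a - π a * D)) from this hq
  refine Submodule.span_le.2 ?_
  rintro _ ⟨c, rfl⟩
  rw [SetLike.mem_coe, Submodule.mem_comap]
  convert reprForm_prodComm_mem_formPairs (Fin.cons (a * c 0) fun s : Fin k => c s.succ) using 1
  simp only [leibnizMul_apply, reprForm, prodComm_succ, Fin.cons_zero, Fin.cons_succ, map_mul,
    pow_zero, one_smul, Prod.mk.injEq]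
  constructor <;> noncomm_ring

theorem leibnizMul_comm_mem_formPairs (a : A) {k : ℕ} {q : Module.End K V × Module.End K V}
    (hq : q ∈ formPairs K π D k) :
    leibnizMul K 1 (D * π a - π a * D, 0) q ∈ formPairs K π D (k + 1) := by
  suffices formPairs K π D k ≤
      (formPairs K π D (k + 1)).comap (leibnizMul K 1 (D * π a - π a * D, 0)) from this hq
  refine Submodule.span_le.2 ?_
  rintro _ ⟨c, rfl⟩
  rw [SetLike.mem_coe, Submodule.mem_comap]
  -- `da (c₀ dc₁ ⋯) = d(a c₀) dc₁ ⋯ - a dc₀ dc₁ ⋯`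
  convert sub_mem
    (reprForm_prodComm_mem_formPairs
      (Fin.cons 1 (Fin.cons (a * c 0) fun s : Fin k => c s.succ : Fin (k + 1) → A)))
    (reprForm_prodComm_mem_formPairs (Fin.cons a c)) using 1
  simp only [leibnizMul_apply, reprForm, prodComm_succ, Fin.cons_zero, Fin.cons_succ, map_mul,
    map_one, pow_one, neg_smul, one_smul, Prod.mk_sub_mk, Prod.mk.injEq]
  constructor <;> noncomm_ring

theorem leibnizMul_prodComm_mem_formPairs {k l : ℕ} (c : Fin k → A)
    {q : Module.End K V × Module.End K V} (hq : q ∈ formPairs K π D l) :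
    leibnizMul K k (prodComm K π D c, 0) q ∈ formPairs K π D (k + l) := by
  induction k with
  | zero => simpa [leibnizMul_apply, prodComm_zero] using hq
  | succ k ih =>
    have hsplit : (prodComm K π D c, (0 : Module.End K V)) =
        leibnizMul K 1 (D * π (c 0) - π (c 0) * D, 0)
          (prodComm K π D fun s : Fin k => c s.succ, 0) := by
      simp [leibnizMul_apply, prodComm_succ]
    rw [hsplit, leibnizMul_assoc (add_comm 1 k), Nat.add_right_comm k 1 l]
    exact leibnizMul_comm_mem_formPairs (c 0) (ih fun s => c s.succ)

theorem leibnizMul_mem_formPairs {k l : ℕ} {p q : Module.End K V × Module.End K V}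
    (hp : p ∈ formPairs K π D k) (hq : q ∈ formPairs K π D l) :
    leibnizMul K k p q ∈ formPairs K π D (k + l) := by
  suffices formPairs K π D k ≤
      (formPairs K π D (k + l)).comap ((leibnizMul K k).flip q) from this hp
  refine Submodule.span_le.2 ?_
  rintro _ ⟨a, rfl⟩
  change leibnizMul K k (reprForm K π D a, prodComm K π D a) q ∈ formPairs K π D (k + l)
  have hsplit : (reprForm K π D a, prodComm K π D a) =
      leibnizMul K 0 (π (a 0), D * π (a 0) - π (a 0) * D)
        (prodComm K π D fun s : Fin k => a s.succ, 0) := by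
    simp [leibnizMul_apply, reprForm, prodComm_succ]
  rw [hsplit, leibnizMul_assoc (zero_add k)]
  exact leibnizMul_pi_mem_formPairs (a 0) (leibnizMul_prodComm_mem_formPairs _ hq)

theorem mul_gradedCommutator_mem_formPairs {k l n : ℕ} (hn : k + l = n) {P Q : Module.End K V}
    (hP : (P, gradedCommutator K D k P) ∈ formPairs K π D k)
    (hQ : (Q, gradedCommutator K D l Q) ∈ formPairs K π D l) :
    (P * Q, gradedCommutator K D n (P * Q)) ∈ formPairs K π D n :=
  hn ▸ leibnizMul_gradedCommutator (R := K) D k l P Q ▸ leibnizMul_mem_formPairs hP hQ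

theorem pi_gradedCommutator_mem_formPairs (a : A) :
    (π a, gradedCommutator K D 0 (π a)) ∈ formPairs K π D 0 := by
  simpa [reprForm, prodComm_succ, prodComm_zero, gradedCommutator_apply] using
    reprForm_prodComm_mem_formPairs (π := π) (D := D) fun _ : Fin 1 => a

theorem comm_gradedCommutator_mem_formPairs
    (hD : (D, gradedCommutator K D 1 D) ∈ formPairs K π D 1) (a : A) :
    (D * π a - π a * D, gradedCommutator K D 1 (D * π a - π a * D)) ∈ formPairs K π D 1 := by
  have ha := pi_gradedCommutator_mem_formPairs (π := π) (D := D) a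
  simpa only [map_sub, Prod.mk_sub_mk] using
    sub_mem (mul_gradedCommutator_mem_formPairs (add_zero 1) hD ha)
      (mul_gradedCommutator_mem_formPairs (zero_add 1) ha hD)

theorem prodComm_gradedCommutator_mem_formPairs
    (hD : (D, gradedCommutator K D 1 D) ∈ formPairs K π D 1) {k : ℕ} (c : Fin k → A) :
    (prodComm K π D c, gradedCommutator K D k (prodComm K π D c)) ∈ formPairs K π D k := by
  induction k with
  | zero => simpa [prodComm_zero] using pi_gradedCommutator_mem_formPairs (π := π) (D := D) 1
  | succ k ih =>
    rw [prodComm_succ]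
    exact mul_gradedCommutator_mem_formPairs (add_comm 1 k)
      (comm_gradedCommutator_mem_formPairs hD (c 0)) (ih _)

theorem reprForm_gradedCommutator_mem_formPairs
    (hD : (D, gradedCommutator K D 1 D) ∈ formPairs K π D 1) {k : ℕ} (a : Fin (k + 1) → A) :
    (reprForm K π D a, gradedCommutator K D k (reprForm K π D a)) ∈ formPairs K π D k :=
  mul_gradedCommutator_mem_formPairs (zero_add k) (pi_gradedCommutator_mem_formPairs (a 0))
    (prodComm_gradedCommutator_mem_formPairs hD _)

theorem prodComm_sub_gradedCommutator_mem_dJSet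
    (hD : (D, gradedCommutator K D 1 D) ∈ formPairs K π D 1) {k : ℕ} (a : Fin (k + 1) → A) :
    prodComm K π D a - gradedCommutator K D k (reprForm K π D a) ∈ dJSet K π D (k + 1) := by
  apply mem_dJSet_succ_of_mem_formPairs
  simpa only [Prod.mk_sub_mk, sub_self] using
    sub_mem (reprForm_prodComm_mem_formPairs a) (reprForm_gradedCommutator_mem_formPairs hD a)

theorem dirac_gradedCommutator_mem_formPairs (hchar : (2 : K) ≠ 0) (hγ : γ * γ = 1)
    (hγD : γ * D = -(D * γ)) {η : A} (hη : π η = γ) :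
    (D, gradedCommutator K D 1 D) ∈ formPairs K π D 1 := by
  have hcomm : D * γ - γ * D = (2 : K) • (D * γ) := by
    rw [hγD, sub_neg_eq_add, two_smul]
  have hγDγ : γ * (D * γ) = -D := by
    rw [← mul_assoc, hγD, neg_mul, mul_assoc, hγ, mul_one]
  have hsq : D * γ * (D * γ) = -(D * D) := by
    rw [mul_assoc, hγDγ, mul_neg]
  -- the one-form `-½ η dη`
  convert Submodule.smul_mem _ (-(2 : K)⁻¹)
    (reprForm_prodComm_mem_formPairs (π := π) (D := D) fun _ : Fin 2 => η) using 1
  simp [reprForm, prodComm_succ, prodComm_zero, gradedCommutator_apply, hη, hcomm, hγDγ, hsq,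
    smul_smul, hchar, ← two_smul K (D * D)]

theorem grading_mul_prodComm (hγπ : ∀ a, γ * π a = π a * γ) (hγD : γ * D = -(D * γ)) {k : ℕ}
    (c : Fin k → A) :
    γ * prodComm K π D c = (-1 : K) ^ k • (prodComm K π D c * γ) := by
  induction k with
  | zero => simp [prodComm_zero]
  | succ k ih =>
    have hcomm : γ * (D * π (c 0) - π (c 0) * D) = -((D * π (c 0) - π (c 0) * D) * γ) := by
      rw [mul_sub, ← mul_assoc, hγD, ← mul_assoc, hγπ, mul_assoc (π (c 0)), hγD, neg_mul,
        mul_assoc D, hγπ]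
      noncomm_ring
    rw [prodComm_succ, ← mul_assoc, hcomm, neg_mul, mul_assoc, ih, mul_smul_comm, pow_succ,
      mul_neg_one, neg_smul, mul_assoc]

theorem grading_mul_reprForm (hγπ : ∀ a, γ * π a = π a * γ) (hγD : γ * D = -(D * γ)) {k : ℕ}
    (a : Fin (k + 1) → A) :
    γ * reprForm K π D a = (-1 : K) ^ k • (reprForm K π D a * γ) := by
  rw [reprForm, ← mul_assoc, hγπ, mul_assoc, grading_mul_prodComm hγπ hγD, mul_smul_comm,
    mul_assoc]

end Forms

section ProductJunk

variable {A₁ A₂ V₁ V₂ : Type*} [Ring A₁] [Algebra K A₁] [Ring A₂] [Algebra K A₂]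
  [AddCommGroup V₁] [Module K V₁] [AddCommGroup V₂] [Module K V₂]

/-- The subspace `Σ_{i+j=n} π₁(dJ₀^{i-1})γ^j ⊗ π₂(Ω^j) + π₁(Ω^i)γ^j ⊗ π₂(dJ₀^{j-1})` of
`End(V₁ ⊗ V₂)`, with `p` in the role of `i`. -/
def productJunk (π₁ : A₁ →ₐ[K] Module.End K V₁) (D₁ γ : Module.End K V₁)
    (π₂ : A₂ →ₐ[K] Module.End K V₂) (D₂ : Module.End K V₂) (n : ℕ) :
    Submodule K (Module.End K (V₁ ⊗[K] V₂)) :=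
  ⨆ p : Fin (n + 1),
    Submodule.span K {T | ∃ P ∈ dJSet K π₁ D₁ p, ∃ Q ∈ piOmega K π₂ D₂ (n - p),
      T = TensorProduct.map (P * γ ^ (n - (p : ℕ))) Q} ⊔
    Submodule.span K {T | ∃ P ∈ piOmega K π₁ D₁ p, ∃ Q ∈ dJSet K π₂ D₂ (n - p),
      T = TensorProduct.map (P * γ ^ (n - (p : ℕ))) Q}

variable {K} {π₁ : A₁ →ₐ[K] Module.End K V₁} {π₂ : A₂ →ₐ[K] Module.End K V₂}
  {D₁ γ P : Module.End K V₁} {D₂ Q : Module.End K V₂}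

theorem map_mem_productJunk_of_mem_dJSet_left {i j n : ℕ} (hn : i + j = n)
    (hP : P ∈ dJSet K π₁ D₁ i) (hQ : Q ∈ piOmega K π₂ D₂ j) :
    TensorProduct.map (P * γ ^ j) Q ∈ productJunk K π₁ D₁ γ π₂ D₂ n := by
  obtain rfl : j = n - i := by omega
  exact Submodule.mem_iSup_of_mem ⟨i, by omega⟩
    (Submodule.mem_sup_left (Submodule.subset_span ⟨P, hP, Q, hQ, rfl⟩))

theorem map_mem_productJunk_of_mem_dJSet_right {i j n : ℕ} (hn : i + j = n)
    (hP : P ∈ piOmega K π₁ D₁ i) (hQ : Q ∈ dJSet K π₂ D₂ j) :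
    TensorProduct.map (P * γ ^ j) Q ∈ productJunk K π₁ D₁ γ π₂ D₂ n := by
  obtain rfl : j = n - i := by omega
  exact Submodule.mem_iSup_of_mem ⟨i, by omega⟩
    (Submodule.mem_sup_right (Submodule.subset_span ⟨P, hP, Q, hQ, rfl⟩))

theorem tilde_d_sub_gradedCommutator_mem_productJunk (hγπ : ∀ a, γ * π₁ a = π₁ a * γ)
    (hγD : γ * D₁ = -(D₁ * γ))
    (hD₁ : (D₁, gradedCommutator K D₁ 1 D₁) ∈ formPairs K π₁ D₁ 1)
    (hD₂ : (D₂, gradedCommutator K D₂ 1 D₂) ∈ formPairs K π₂ D₂ 1)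
    {i j : ℕ} (a : Fin (i + 1) → A₁) (b : Fin (j + 1) → A₂) :
    TensorProduct.map (prodComm K π₁ D₁ a * γ ^ j) (reprForm K π₂ D₂ b) +
        (-1 : K) ^ i •
          TensorProduct.map (reprForm K π₁ D₁ a * γ ^ (j + 1)) (prodComm K π₂ D₂ b) -
      gradedCommutator K (productDirac D₁ γ D₂) (i + j)
        (TensorProduct.map (reprForm K π₁ D₁ a * γ ^ j) (reprForm K π₂ D₂ b)) ∈
      productJunk K π₁ D₁ γ π₂ D₂ (i + j + 1) := by
  have hleft := map_mem_productJunk_of_mem_dJSet_left (γ := γ) (add_right_comm i 1 j)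
    (prodComm_sub_gradedCommutator_mem_dJSet hD₁ a) (reprForm_mem_piOmega (π := π₂) (D := D₂) b)
  have hright := map_mem_productJunk_of_mem_dJSet_right (γ := γ) (add_assoc i j 1).symm
    (reprForm_mem_piOmega (π := π₁) (D := D₁) a) (prodComm_sub_gradedCommutator_mem_dJSet hD₂ b)
  rw [sub_mul, tensorMap_sub_left] at hleft
  rw [tensorMap_sub_right] at hright
  rw [gradedCommutator_productDirac_map hγD (grading_mul_reprForm hγπ hγD a), add_sub_add_comm]
  convert add_mem hleft (Submodule.smul_mem _ ((-1 : K) ^ i) hright) using 2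
  rw [smul_sub]

theorem tilde_d_of_tilde_J_mem_general (hγπ : ∀ a, γ * π₁ a = π₁ a * γ)
    (hγD : γ * D₁ = -(D₁ * γ))
    (hD₁ : (D₁, gradedCommutator K D₁ 1 D₁) ∈ formPairs K π₁ D₁ 1)
    (hD₂ : (D₂, gradedCommutator K D₂ 1 D₂) ∈ formPairs K π₂ D₂ 1)
    {ι : Type*} [Fintype ι] {n : ℕ} {i j : ι → ℕ} (hij : ∀ t, i t + j t + 1 = n)
    (a : ∀ t, Fin (i t + 1) → A₁) (b : ∀ t, Fin (j t + 1) → A₂)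
    (hzero : ∑ t, TensorProduct.map (reprForm K π₁ D₁ (a t) * γ ^ j t)
      (reprForm K π₂ D₂ (b t)) = 0) :
    ∑ t, (TensorProduct.map (prodComm K π₁ D₁ (a t) * γ ^ j t) (reprForm K π₂ D₂ (b t)) +
        (-1 : K) ^ i t • TensorProduct.map (reprForm K π₁ D₁ (a t) * γ ^ (j t + 1))
          (prodComm K π₂ D₂ (b t))) ∈
      productJunk K π₁ D₁ γ π₂ D₂ n := by
  have hcomm : ∑ t, gradedCommutator K (productDirac D₁ γ D₂) (n - 1)
      (TensorProduct.map (reprForm K π₁ D₁ (a t) * γ ^ j t) (reprForm K π₂ D₂ (b t))) = 0 := by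
    rw [← map_sum, hzero, map_zero]
  rw [← sub_zero (∑ t, _), ← hcomm, ← Finset.sum_sub_distrib]
  refine Submodule.sum_mem _ fun t _ => ?_
  rw [← hij t, Nat.add_sub_cancel]
  exact tilde_d_sub_gradedCommutator_mem_productJunk hγπ hγD hD₁ hD₂ (a t) (b t)

end ProductJunk

/-- **Statement 7.** -/
theorem tilde_d_of_tilde_J_mem
    (A₁ A₂ V₁ V₂ : Type*) [Ring A₁] [Algebra K A₁] [Ring A₂] [Algebra K A₂]
    [AddCommGroup V₁] [Module K V₁] [AddCommGroup V₂] [Module K V₂]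
    (π₁ : A₁ →ₐ[K] Module.End K V₁) (π₂ : A₂ →ₐ[K] Module.End K V₂)
    (D₁ γ₁ : Module.End K V₁) (D₂ γ₂ : Module.End K V₂)
    (hγ₁ : γ₁ * γ₁ = 1) (hγπ₁ : ∀ a, γ₁ * π₁ a = π₁ a * γ₁) (hγD₁ : γ₁ * D₁ = -(D₁ * γ₁))
    (hγ₂ : γ₂ * γ₂ = 1) (hγπ₂ : ∀ a, γ₂ * π₂ a = π₂ a * γ₂) (hγD₂ : γ₂ * D₂ = -(D₂ * γ₂))
    (η₁ : A₁) (hη₁ : π₁ η₁ = γ₁) (η₂ : A₂) (hη₂ : π₂ η₂ = γ₂)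
    (hchar : (2 : K) ≠ 0)
    (n : ℕ) (hn : 1 ≤ n)
    (m : ℕ) (i j : Fin m → ℕ) (hij : ∀ t, i t + j t = n - 1)
    (a : ∀ t : Fin m, Fin (i t + 1) → A₁) (b : ∀ t : Fin m, Fin (j t + 1) → A₂)
    -- the hypothesis `Σ_t (P_t ∘ γ₁^{j_t}) ⊗ Q_t = 0`:
    (hzero : ∑ t : Fin m,
        TensorProduct.map
          ((π₁ (a t 0) * prodComm K π₁ D₁ (fun s : Fin (i t) => a t s.succ)) * γ₁ ^ (j t)
            : V₁ →ₗ[K] V₁)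
          ((π₂ (b t 0) * prodComm K π₂ D₂ (fun s : Fin (j t) => b t s.succ)) : V₂ →ₗ[K] V₂)
        = 0) :
    -- conclusion : `Σ_t (P′_t γ₁^{j_t}) ⊗ Q_t + (−1)^{i_t} (P_t γ₁^{j_t+1}) ⊗ Q′_t` lies in
    -- `Σ_{i+j=n} span{(P γ₁^j) ⊗ Q : P ∈ π₁(dJ₀^{i−1}), Q ∈ π₂(Ω^j)}
    --           + span{(P γ₁^j) ⊗ Q : P ∈ π₁(Ω^i), Q ∈ π₂(dJ₀^{j−1})}`
    (∑ t : Fin m,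
        (TensorProduct.map
          ((prodComm K π₁ D₁ (a t)) * γ₁ ^ (j t) : V₁ →ₗ[K] V₁)
          ((π₂ (b t 0) * prodComm K π₂ D₂ (fun s : Fin (j t) => b t s.succ)) : V₂ →ₗ[K] V₂)
        + ((-1 : K) ^ (i t)) •
          TensorProduct.map
            ((π₁ (a t 0) * prodComm K π₁ D₁ (fun s : Fin (i t) => a t s.succ)) * γ₁ ^ (j t + 1)
              : V₁ →ₗ[K] V₁)
            ((prodComm K π₂ D₂ (b t)) : V₂ →ₗ[K] V₂)))
      ∈ ⨆ p : Fin (n + 1),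
          (Submodule.span K
            {T : Module.End K (V₁ ⊗[K] V₂) |
              ∃ P ∈ dJSet K π₁ D₁ (p : ℕ), ∃ Q ∈ piOmega K π₂ D₂ (n - (p : ℕ)),
                T = TensorProduct.map ((P * γ₁ ^ (n - (p : ℕ))) : V₁ →ₗ[K] V₁) (Q : V₂ →ₗ[K] V₂)}
          ⊔ Submodule.span K
            {T : Module.End K (V₁ ⊗[K] V₂) |
              ∃ P ∈ piOmega K π₁ D₁ (p : ℕ), ∃ Q ∈ dJSet K π₂ D₂ (n - (p : ℕ)),
                T = TensorProduct.map ((P * γ₁ ^ (n - (p : ℕ))) : V₁ →ₗ[K] V₁) (Q : V₂ →ₗ[K] V₂)}) :=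
  tilde_d_of_tilde_J_mem_general hγπ₁ hγD₁
    (dirac_gradedCommutator_mem_formPairs hchar hγ₁ hγD₁ hη₁)
    (dirac_gradedCommutator_mem_formPairs hchar hγ₂ hγD₂ hη₂)
    (fun t => by rw [hij t, Nat.sub_add_cancel hn]) a b hzero
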